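/- arXiv:1406.3974 — 3 statements merged into one kernel-verified Lean document; each statement's English description precedes it below -/
import Mathlib

section
/- Let k ≥ 1, let u be an infinite word over a finite alphabet Σ, and suppose Fac(u) ⊆ S_1 · S_2 ⋯ S_{k+1} for languages S_1, …, S_{k+1} ⊆ Σ* such that p_{S_i}(n) ≤ C for all i and all n ≥ 0. Then for every n ≥ 1, p_u(n) ≤ C^{k+1} · binom(n+k, k); in particular p_u(n) = O(n^k), so 𝓦_{k+1} ⊆ 𝓟(k). -/
/-!
A factor of length `n` splits into `k + 1` blocks, one from each `S_i`. The block lengths form a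
weak composition of `n` into `k + 1` parts, of which there are `binom(n+k, k)`, and each composition
leaves at most `C` choices per block. For `n ≥ 1` the binomial coefficient is at most
`(n+k)^k ≤ ((k+1) n)^k`.
-/

/-- The factor of the infinite word `u` of length `n` starting at position `i`. -/
def wordSeg {α : Type*} (u : ℕ → α) (i n : ℕ) : List α :=
  (List.range n).map (fun t => u (i + t))

/-- The set of (finite) factors of the infinite word `u`. -/
def Factors {α : Type*} (u : ℕ → α) : Set (List α) :=
  {w | ∃ i, w = wordSeg u i w.length}

/-- Subword complexity: the number of distinct factors of `u` of length `n`. -/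
noncomputable def complexity {α : Type*} (u : ℕ → α) (n : ℕ) : ℕ :=
  {w : List α | w.length = n ∧ w ∈ Factors u}.ncard

/-- `p_L(n)`: the number of words of length `n` in the language `L`. -/
noncomputable def langComplexity {α : Type*} (L : Set (List α)) (n : ℕ) : ℕ :=
  {w ∈ L | w.length = n}.ncard

section Counting

open Finset

variable {α : Type*} {m : ℕ}

lemma card_piAntidiag_univ {ι : Type*} [Fintype ι] [DecidableEq ι] (n : ℕ) :
    #(piAntidiag (univ : Finset ι) n) = (Fintype.card ι).multichoose n := by
  rw [← map_sym_eq_piAntidiag, card_map, sym_univ, card_univ, Sym.card_sym_eq_multichoose]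

lemma multichoose_succ_left_eq_choose (k n : ℕ) :
    (k + 1).multichoose n = (n + k).choose k := by
  rw [Nat.multichoose_eq, show k + 1 + n - 1 = n + k by lia, Nat.choose_symm_add]

lemma add_choose_right_le_mul_pow {n : ℕ} (k : ℕ) (hn : 1 ≤ n) :
    (n + k).choose k ≤ (k + 1) ^ k * n ^ k :=
  calc (n + k).choose k ≤ (n + k) ^ k := Nat.choose_le_pow _ _
    _ ≤ ((k + 1) * n) ^ k := Nat.pow_le_pow_left (by nlinarith) k
    _ = (k + 1) ^ k * n ^ k := mul_pow _ _ _

/-- The words of length `n` in the language `L`. Their number is `langComplexity L n` when there are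
finitely many of them; otherwise `langComplexity L n` has the junk value `0`. -/
def wordsOfLength (L : Set (List α)) (n : ℕ) : Set (List α) :=
  {w ∈ L | w.length = n}

/-- The concatenation `S_1 ⋯ S_m` of a tuple of languages, as the set of words `s_1 ⋯ s_m` with
`s_i ∈ S_i`. -/
def concatenation (S : Fin m → Set (List α)) : Set (List α) :=
  {w | ∃ s : Fin m → List α, (∀ i, s i ∈ S i) ∧ w = (List.ofFn s).flatten}

lemma length_flatten_ofFn (s : Fin m → List α) :
    (List.ofFn s).flatten.length = ∑ i, (s i).length := by
  rw [List.length_flatten, List.map_ofFn, List.sum_ofFn]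
  rfl

lemma wordsOfLength_concatenation_subset (S : Fin m → Set (List α)) (n : ℕ) :
    wordsOfLength (concatenation S) n ⊆ ⋃ l ∈ piAntidiag univ n,
      (fun s : Fin m → List α ↦ (List.ofFn s).flatten) ''
        Set.univ.pi fun i ↦ wordsOfLength (S i) (l i) := by
  rintro _ ⟨⟨s, hs, rfl⟩, hlen⟩
  have hl : (fun i ↦ (s i).length) ∈ piAntidiag univ n :=
    mem_piAntidiag.2 ⟨(length_flatten_ofFn s).symm.trans hlen, fun i _ ↦ mem_univ i⟩
  exact Set.mem_biUnion hl ⟨s, fun i _ ↦ ⟨hs i, rfl⟩, rfl⟩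

lemma encard_wordsOfLength_concatenation_le_sum_prod (S : Fin m → Set (List α)) (n : ℕ) :
    (wordsOfLength (concatenation S) n).encard ≤
      ∑ l ∈ piAntidiag univ n, ∏ i, (wordsOfLength (S i) (l i)).encard := by
  refine (Set.encard_le_encard (wordsOfLength_concatenation_subset S n)).trans <|
    (set_encard_biUnion_le _ _).trans <| sum_le_sum fun l _ ↦ ?_
  exact (Set.encard_image_le _ _).trans_eq Set.encard_pi_eq_prod_encard

lemma encard_wordsOfLength_concatenation_le {S : Fin m → Set (List α)} {C : ℕ∞}
    (hS : ∀ i n, (wordsOfLength (S i) n).encard ≤ C) (n : ℕ) :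
    (wordsOfLength (concatenation S) n).encard ≤ C ^ m * m.multichoose n :=
  calc (wordsOfLength (concatenation S) n).encard
    _ ≤ ∑ l ∈ piAntidiag univ n, ∏ i, (wordsOfLength (S i) (l i)).encard :=
        encard_wordsOfLength_concatenation_le_sum_prod S n
    _ ≤ ∑ _l ∈ piAntidiag (univ : Finset (Fin m)) n, ∏ _i : Fin m, C :=
        sum_le_sum fun l _ ↦ prod_le_prod' fun i _ ↦ hS i (l i)
    _ = C ^ m * m.multichoose n := by simp [card_piAntidiag_univ, mul_comm]

lemma langComplexity_le_of_subset_concatenation {S : Fin m → Set (List α)} {C : ℕ}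
    (hfin : ∀ i n, (wordsOfLength (S i) n).Finite) (hS : ∀ i n, langComplexity (S i) n ≤ C)
    {L : Set (List α)} (hL : L ⊆ concatenation S) (n : ℕ) :
    langComplexity L n ≤ C ^ m * m.multichoose n := by
  have hS' : ∀ i n, (wordsOfLength (S i) n).encard ≤ C := fun i n ↦
    Set.encard_le_coe_iff_finite_ncard_le.2 ⟨hfin i n, hS i n⟩
  have hLS : wordsOfLength L n ⊆ wordsOfLength (concatenation S) n := fun _ hw ↦ ⟨hL hw.1, hw.2⟩
  have hcard : (wordsOfLength L n).encard ≤ (C ^ m * m.multichoose n : ℕ) := by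
    push_cast
    exact (Set.encard_le_encard hLS).trans (encard_wordsOfLength_concatenation_le hS' n)
  exact (Set.encard_le_coe_iff_finite_ncard_le.1 hcard).2

lemma finite_wordsOfLength [Finite α] (L : Set (List α)) (n : ℕ) : (wordsOfLength L n).Finite :=
  (List.finite_length_eq α n).subset fun _ hw ↦ hw.2

lemma complexity_eq_langComplexity_factors (u : ℕ → α) (n : ℕ) :
    complexity u n = langComplexity (Factors u) n := by
  simp only [complexity, langComplexity, and_comm]

end Counting

theorem stmt0_general {α : Type*} (k : ℕ) (L : Set (List α)) (S : Fin (k + 1) → Set (List α))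
    (C : ℕ) (hfin : ∀ i n, (wordsOfLength (S i) n).Finite)
    (hS : ∀ i n, langComplexity (S i) n ≤ C) (hL : L ⊆ concatenation S) :
    (∀ n, langComplexity L n ≤ C ^ (k + 1) * (n + k).choose k) ∧
    ∃ c : ℕ, ∀ n, 1 ≤ n → langComplexity L n ≤ c * n ^ k := by
  have hchoose (n : ℕ) : langComplexity L n ≤ C ^ (k + 1) * (n + k).choose k :=
    multichoose_succ_left_eq_choose k n ▸ langComplexity_le_of_subset_concatenation hfin hS hL n
  refine ⟨hchoose, C ^ (k + 1) * (k + 1) ^ k, fun n hn ↦ ?_⟩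
  calc langComplexity L n ≤ C ^ (k + 1) * (n + k).choose k := hchoose n
    _ ≤ C ^ (k + 1) * ((k + 1) ^ k * n ^ k) := by
        gcongr
        exact add_choose_right_le_mul_pow k hn
    _ = C ^ (k + 1) * (k + 1) ^ k * n ^ k := (mul_assoc _ _ _).symm

/-- if `Fac(u) ⊆ S_1 ⋯ S_{k+1}` with `p_{S_i}(n) ≤ C` for all `i, n`, then
`p_u(n) ≤ C^{k+1} · binom(n+k, k)` for all `n ≥ 1`; in particular `p_u(n) = O(n^k)`. -/
theorem stmt0 {α : Type*} [Fintype α] (k : ℕ) (hk : 1 ≤ k) (u : ℕ → α)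
    (S : Fin (k + 1) → Set (List α)) (C : ℕ)
    (hS : ∀ i, ∀ n, langComplexity (S i) n ≤ C)
    (hFac : ∀ w ∈ Factors u, ∃ s : Fin (k + 1) → List α,
      (∀ i, s i ∈ S i) ∧ w = (List.ofFn s).flatten) :
    (∀ n, 1 ≤ n → complexity u n ≤ C ^ (k + 1) * Nat.choose (n + k) k) ∧
    ∃ c : ℕ, ∀ n, 1 ≤ n → complexity u n ≤ c * n ^ k := by
  simp only [complexity_eq_langComplexity_factors]
  exact (stmt0_general k (Factors u) S C (fun i ↦ finite_wordsOfLength (S i)) hS hFac).imp_left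
    fun h n _ ↦ h n
end

section
/- Let u be an infinite word over a finite alphabet with p_u(n) ≤ C·n for all n ≥ 1, where C is a positive constant. Then there exist a constant B and languages S and T with p_S(n) ≤ B and p_T(n) ≤ B for all n ≥ 0, such that every factor of u belongs to S·T. -/
theorem exists_increment_le {f : ℕ → ℕ} {a d D : ℕ} (h : f (a + d) < d * (D + 1)) :
    ∃ m, a ≤ m ∧ m < a + d ∧ f (m + 1) ≤ f m + D := by
  by_contra! hlarge
  have hgrowth : ∀ e ≤ d, e * (D + 1) ≤ f (a + e) := by
    intro e
    induction e with
    | zero => simp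
    | succ e ih =>
      intro he
      have hprev := ih (by omega)
      have hstep := hlarge (a + e) (by omega) (by omega)
      rw [← add_assoc, add_mul]
      omega
  exact (hgrowth d le_rfl).not_gt h

section Runs

/-- The starting points of the maximal runs of consecutive elements of `F`. -/
def runStarts (F : Set ℕ) : Set ℕ :=
  {e ∈ F | ∀ j ∈ F, j + 1 ≠ e}

theorem runStarts_subset (F : Set ℕ) : runStarts F ⊆ F := fun _ he => he.1

theorem exists_mem_runStarts_Icc_subset {F : Set ℕ} {i : ℕ} (hi : i ∈ F) :
    ∃ e ∈ runStarts F, e ≤ i ∧ Set.Icc e i ⊆ F := by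
  induction i with
  | zero => exact ⟨0, ⟨hi, fun j _ => j.succ_ne_zero⟩, le_rfl, by simpa using hi⟩
  | succ i ih =>
    by_cases hpred : i ∈ F
    · obtain ⟨e, he, hei, hsub⟩ := ih hpred
      refine ⟨e, he, hei.trans i.le_succ, fun j hj => ?_⟩
      rcases hj.2.eq_or_lt with rfl | hlt
      · exact hi
      · exact hsub ⟨hj.1, Nat.le_of_lt_succ hlt⟩
    · refine ⟨i + 1, ⟨hi, fun j hj hji => hpred ?_⟩, le_rfl, by simpa using hi⟩
      rwa [← Nat.succ_injective hji]

theorem exists_mem_runStarts_lt_add_ncard {F : Set ℕ} (hF : F.Finite) {i : ℕ} (hi : i ∈ F) :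
    ∃ e ∈ runStarts F, e ≤ i ∧ i < e + F.ncard := by
  obtain ⟨e, he, hei, hsub⟩ := exists_mem_runStarts_Icc_subset hi
  have hcard : (Set.Icc e i).ncard ≤ F.ncard := Set.ncard_le_ncard hsub hF
  rw [← Finset.coe_Icc, Set.ncard_coe_finset, Nat.card_Icc] at hcard
  exact ⟨e, he, hei, by omega⟩

theorem exists_grid_along_runs {F : Set ℕ} (hF : F.Finite) {q N : ℕ} (hq : 0 < q)
    (hN : F.ncard ≤ N * q) :
    ∃ Q : Set ℕ, Q.Finite ∧ Q.ncard ≤ (runStarts F).ncard * N ∧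
      ∀ i ∈ F, ∃ c ∈ Q, i + q ≤ c ∧ c ≤ i + 2 * q := by
  have hfin : (runStarts F ×ˢ Set.Iio N).Finite :=
    (hF.subset (runStarts_subset F)).prod (Set.finite_Iio N)
  refine ⟨(fun x : ℕ × ℕ => x.1 + (x.2 + 2) * q) '' (runStarts F ×ˢ Set.Iio N),
    hfin.image _, ?_, fun i hi => ?_⟩
  · refine (Set.ncard_image_le hfin).trans_eq ?_
    rw [Set.ncard_prod, ← Finset.coe_Iio, Set.ncard_coe_finset, Nat.card_Iio]
  · obtain ⟨e, he, hei, hie⟩ := exists_mem_runStarts_lt_add_ncard hF hi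
    have hindex : (i - e) / q < N := (Nat.div_lt_iff_lt_mul hq).2 (by omega)
    have hdiv : (i - e) / q * q + (i - e) % q = i - e := Nat.div_add_mod' _ _
    have hmod : (i - e) % q < q := Nat.mod_lt _ hq
    refine ⟨_, ⟨(e, (i - e) / q), ⟨he, hindex⟩, rfl⟩, ?_, ?_⟩ <;>
    · simp only [add_mul]
      omega

end Runs

section Segments

variable {α : Type*}

theorem length_wordSeg (u : ℕ → α) (i n : ℕ) : (wordSeg u i n).length = n := by
  simp [wordSeg]

theorem wordSeg_eq_wordSeg_iff {i j n : ℕ} :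
    wordSeg u i n = wordSeg u j n ↔ ∀ t < n, u (i + t) = u (j + t) := by
  simp [wordSeg]

theorem wordSeg_eq_of_le {i j m n : ℕ} (hnm : n ≤ m) (h : wordSeg u i m = wordSeg u j m) :
    wordSeg u i n = wordSeg u j n :=
  wordSeg_eq_wordSeg_iff.2 fun t ht => wordSeg_eq_wordSeg_iff.1 h t (ht.trans_le hnm)

theorem wordSeg_succ_eq_cons (u : ℕ → α) (i n : ℕ) :
    wordSeg u i (n + 1) = u i :: wordSeg u (i + 1) n := by
  simp [wordSeg, List.range_succ_eq_map, Function.comp_def, add_assoc, add_comm 1]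

theorem wordSeg_add (u : ℕ → α) (i a b : ℕ) :
    wordSeg u i (a + b) = wordSeg u i a ++ wordSeg u (i + a) b := by
  simp [wordSeg, List.range_add, Function.comp_def, add_assoc]

theorem wordSeg_mem_factors (u : ℕ → α) (i n : ℕ) : wordSeg u i n ∈ Factors u :=
  ⟨i, by rw [length_wordSeg]⟩

theorem nil_mem_factors (u : ℕ → α) : [] ∈ Factors u := wordSeg_mem_factors u 0 0

theorem finite_factors_of_length (u : ℕ → α) [Finite (Set.range u)] (n : ℕ) :
    {w | w.length = n ∧ w ∈ Factors u}.Finite := by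
  refine ((List.finite_length_eq (Set.range u) n).image (List.map Subtype.val)).subset ?_
  rintro w ⟨rfl, i, hw⟩
  refine ⟨wordSeg (Set.rangeFactorization u) i w.length, length_wordSeg _ _ _, ?_⟩
  conv_rhs => rw [hw]
  simp [wordSeg, Function.comp_def]

end Segments

section FirstOccurrences

variable {α : Type*} {u : ℕ → α}

/-- The positions at which a factor of `u` of length `m` occurs for the first time; they enumerate
these factors without repetition. -/
def firstOcc (u : ℕ → α) (m : ℕ) : Set ℕ :=
  {i | ∀ j < i, wordSeg u j m ≠ wordSeg u i m}

theorem exists_mem_firstOcc (u : ℕ → α) (m i : ℕ) :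
    ∃ j ∈ firstOcc u m, wordSeg u j m = wordSeg u i m := by
  classical
  have hex : ∃ j, wordSeg u j m = wordSeg u i m := ⟨i, rfl⟩
  refine ⟨Nat.find hex, fun j hj hji => ?_, Nat.find_spec hex⟩
  exact Nat.find_min hex hj (hji.trans (Nat.find_spec hex))

theorem bijOn_firstOcc (u : ℕ → α) (m : ℕ) :
    Set.BijOn (wordSeg u · m) (firstOcc u m) {w | w.length = m ∧ w ∈ Factors u} := by
  refine ⟨fun i _ => ⟨length_wordSeg u i m, wordSeg_mem_factors u i m⟩, fun i hi j hj hij => ?_, ?_⟩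
  · rcases lt_trichotomy i j with hlt | heq | hgt
    · exact absurd hij (hj i hlt)
    · exact heq
    · exact absurd hij.symm (hi j hgt)
  · rintro w ⟨rfl, i, hi⟩
    obtain ⟨j, hj, hji⟩ := exists_mem_firstOcc u w.length i
    exact ⟨j, hj, hji.trans hi.symm⟩

theorem ncard_firstOcc (u : ℕ → α) (m : ℕ) : (firstOcc u m).ncard = complexity u m :=
  (bijOn_firstOcc u m).ncard_eq

theorem finite_firstOcc (u : ℕ → α) [Finite (Set.range u)] (m : ℕ) : (firstOcc u m).Finite :=
  (bijOn_firstOcc u m).finite_iff_finite.2 (finite_factors_of_length u m)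

theorem firstOcc_subset_firstOcc_succ (u : ℕ → α) (m : ℕ) : firstOcc u m ⊆ firstOcc u (m + 1) :=
  fun _ hi j hj h => hi j hj (wordSeg_eq_of_le m.le_succ h)

theorem mem_firstOcc_succ_of_succ_mem {m i : ℕ} (h : i + 1 ∈ firstOcc u m) :
    i ∈ firstOcc u (m + 1) := by
  intro j hj hji
  rw [wordSeg_succ_eq_cons, wordSeg_succ_eq_cons] at hji
  exact h (j + 1) (Nat.succ_lt_succ hj) (List.cons.inj hji).2

theorem runStarts_firstOcc_subset (u : ℕ → α) (m : ℕ) :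
    runStarts (firstOcc u m) ⊆ insert 0 (Nat.succ '' (firstOcc u (m + 1) \ firstOcc u m)) := by
  rintro (_ | i) ⟨hi, hstart⟩
  · exact Set.mem_insert _ _
  · exact Or.inr ⟨i, ⟨mem_firstOcc_succ_of_succ_mem hi, fun hmem => hstart i hmem rfl⟩, rfl⟩

theorem ncard_runStarts_firstOcc_le (u : ℕ → α) [Finite (Set.range u)] (m : ℕ) :
    (runStarts (firstOcc u m)).ncard ≤ complexity u (m + 1) - complexity u m + 1 := by
  have hfin : (firstOcc u (m + 1) \ firstOcc u m).Finite := (finite_firstOcc u (m + 1)).sdiff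
  calc (runStarts (firstOcc u m)).ncard
      ≤ (insert 0 (Nat.succ '' (firstOcc u (m + 1) \ firstOcc u m))).ncard :=
        Set.ncard_le_ncard (runStarts_firstOcc_subset u m) ((hfin.image _).insert _)
    _ ≤ (Nat.succ '' (firstOcc u (m + 1) \ firstOcc u m)).ncard + 1 := Set.ncard_insert_le _ _
    _ ≤ (firstOcc u (m + 1) \ firstOcc u m).ncard + 1 :=
        Nat.add_le_add_right (Set.ncard_image_le hfin) 1
    _ = complexity u (m + 1) - complexity u m + 1 := by
        rw [Set.ncard_sdiff (firstOcc_subset_firstOcc_succ u m) (finite_firstOcc u m),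
          ncard_firstOcc, ncard_firstOcc]

end FirstOccurrences

section CutSets

variable {α : Type*} {u : ℕ → α}

/-- `Q` cuts the factors of `u` at scale `q`: every factor of length `8 * q`, hence also every
shorter one, has an occurrence with a point of `Q` at distance between `q` and `2 * q` from its
start. -/
def IsCutSet (u : ℕ → α) (q : ℕ) (Q : Set ℕ) : Prop :=
  ∀ j, ∃ i, wordSeg u i (8 * q) = wordSeg u j (8 * q) ∧ ∃ c ∈ Q, i + q ≤ c ∧ c ≤ i + 2 * q

theorem exists_isCutSet_of_increment_le [Finite (Set.range u)] {q m D N : ℕ} (hq : 0 < q)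
    (hm : 8 * q ≤ m) (hinc : complexity u (m + 1) ≤ complexity u m + D)
    (hN : complexity u m ≤ N * q) :
    ∃ Q : Set ℕ, IsCutSet u q Q ∧ Q.Finite ∧ Q.ncard ≤ (D + 1) * N := by
  obtain ⟨Q, hQfin, hQcard, hQ⟩ :=
    exists_grid_along_runs (finite_firstOcc u m) hq ((ncard_firstOcc u m).trans_le hN)
  have hruns : (runStarts (firstOcc u m)).ncard ≤ D + 1 :=
    (ncard_runStarts_firstOcc_le u m).trans (by omega)
  refine ⟨Q, fun j => ?_, hQfin, hQcard.trans (Nat.mul_le_mul_right N hruns)⟩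
  obtain ⟨i, hi, hij⟩ := exists_mem_firstOcc u m j
  exact ⟨i, wordSeg_eq_of_le hm hij, hQ i hi⟩

theorem exists_isCutSet [Finite (Set.range u)] {C : ℕ}
    (hp : ∀ n, 1 ≤ n → complexity u n ≤ C * n) {q : ℕ} (hq : 0 < q) :
    ∃ Q : Set ℕ, IsCutSet u q Q ∧ Q.Finite ∧ Q.ncard ≤ (2 * C + 1) * (16 * C) := by
  have hsmall : complexity u (8 * q + 8 * q) < 8 * q * (2 * C + 1) :=
    (hp _ (by omega)).trans_lt (by linarith)
  obtain ⟨m, hm, hm', hinc⟩ := exists_increment_le hsmall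
  refine exists_isCutSet_of_increment_le hq hm hinc ?_
  calc complexity u m ≤ C * m := hp m (by omega)
    _ ≤ C * (16 * q) := by gcongr; omega
    _ = 16 * C * q := by ring

end CutSets

section Parts

variable {α : Type*} {u : ℕ → α}

/-- The factors of `u` having an occurrence that ends just before a point of `Q`: the left parts of
factors cut at `Q`. -/
def factorsEndingAt (u : ℕ → α) (Q : Set ℕ) : Set (List α) :=
  {s | ∃ i, i + s.length ∈ Q ∧ s = wordSeg u i s.length}

/-- The factors of `u` having an occurrence that starts at a point of `Q`: the right parts of
factors cut at `Q`. -/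
def factorsStartingAt (u : ℕ → α) (Q : Set ℕ) : Set (List α) :=
  {t | ∃ c ∈ Q, t = wordSeg u c t.length}

theorem factorsEndingAt_subset_factors (u : ℕ → α) (Q : Set ℕ) :
    factorsEndingAt u Q ⊆ Factors u :=
  fun _ ⟨i, _, hs⟩ => ⟨i, hs⟩

theorem factorsStartingAt_subset_factors (u : ℕ → α) (Q : Set ℕ) :
    factorsStartingAt u Q ⊆ Factors u :=
  fun _ ⟨c, _, ht⟩ => ⟨c, ht⟩

theorem langComplexity_factorsEndingAt_le (u : ℕ → α) {Q : Set ℕ} (hQ : Q.Finite) (n : ℕ) :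
    langComplexity (factorsEndingAt u Q) n ≤ Q.ncard := by
  have hsub : {s ∈ factorsEndingAt u Q | s.length = n} ⊆ (fun c => wordSeg u (c - n) n) '' Q := by
    rintro s ⟨⟨i, hi, hs⟩, rfl⟩
    exact ⟨i + s.length, hi, by simpa using hs.symm⟩
  exact (Set.ncard_le_ncard hsub (hQ.image _)).trans (Set.ncard_image_le hQ)

theorem langComplexity_factorsStartingAt_le (u : ℕ → α) {Q : Set ℕ} (hQ : Q.Finite) (n : ℕ) :
    langComplexity (factorsStartingAt u Q) n ≤ Q.ncard := by
  have hsub : {t ∈ factorsStartingAt u Q | t.length = n} ⊆ (wordSeg u · n) '' Q := by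
    rintro t ⟨⟨c, hc, ht⟩, rfl⟩
    exact ⟨c, hc, ht.symm⟩
  exact (Set.ncard_le_ncard hsub (hQ.image _)).trans (Set.ncard_image_le hQ)

theorem IsCutSet.exists_eq_append {q : ℕ} {Q : Set ℕ} (hQ : IsCutSet u q Q) {w : List α}
    (hw : w ∈ Factors u) (hlo : 4 * q ≤ w.length) (hhi : w.length < 8 * q) :
    ∃ s ∈ factorsEndingAt u Q, ∃ t ∈ factorsStartingAt u Q, w = s ++ t ∧
      s.length ∈ Set.Ico q (8 * q) ∧ t.length ∈ Set.Ico q (8 * q) := by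
  obtain ⟨j, hj⟩ := hw
  obtain ⟨i, hij, c, hc, hic, hci⟩ := hQ j
  obtain ⟨a, rfl⟩ := Nat.exists_eq_add_of_le (show i ≤ c by omega)
  obtain ⟨b, hab⟩ := Nat.exists_eq_add_of_le (show a ≤ w.length by omega)
  refine ⟨wordSeg u i a, ⟨i, ?_⟩, wordSeg u (i + a) b, ⟨i + a, hc, ?_⟩, ?_, ?_, ?_⟩
  · rw [length_wordSeg]
    exact ⟨hc, rfl⟩
  · rw [length_wordSeg]
  · rw [← wordSeg_add, ← hab, wordSeg_eq_of_le hhi.le hij, ← hj]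
  · rw [length_wordSeg, Set.mem_Ico]
    omega
  · rw [length_wordSeg, Set.mem_Ico]
    omega

end Parts

section Languages

variable {α : Type*} {u : ℕ → α}

theorem langComplexity_union_le (L M : Set (List α)) (n : ℕ) :
    langComplexity (L ∪ M) n ≤ langComplexity L n + langComplexity M n := by
  have hsep : {w ∈ L ∪ M | w.length = n} = {w ∈ L | w.length = n} ∪ {w ∈ M | w.length = n} :=
    Set.ext fun _ => or_and_right
  simpa only [langComplexity, hsep] using Set.ncard_union_le _ _

theorem langComplexity_singleton_le (w : List α) (n : ℕ) : langComplexity {w} n ≤ 1 :=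
  (Set.ncard_le_ncard (Set.sep_subset _ _)).trans_eq (Set.ncard_singleton _)

theorem complexity_zero (u : ℕ → α) : complexity u 0 = 1 := by
  have hnil : {w | w.length = 0 ∧ w ∈ Factors u} = {[]} := by
    ext w
    refine ⟨fun h => List.length_eq_zero_iff.1 h.1, ?_⟩
    rintro rfl
    exact ⟨rfl, nil_mem_factors u⟩
  rw [complexity, hnil, Set.ncard_singleton]

theorem langComplexity_factors_length_lt_le {B N : ℕ} (hB : ∀ n < N, complexity u n ≤ B) (n : ℕ) :
    langComplexity {w ∈ Factors u | w.length < N} n ≤ B := by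
  by_cases hn : n < N
  · refine (congrArg Set.ncard ?_).trans_le (hB n hn)
    ext w
    exact ⟨fun hw => ⟨hw.2, hw.1.1⟩, fun hw => ⟨⟨hw.2, hw.1.trans_lt hn⟩, hw.1⟩⟩
  · have hempty : {w ∈ {w ∈ Factors u | w.length < N} | w.length = n} = ∅ :=
      Set.eq_empty_of_forall_notMem fun w hw => hn (hw.2 ▸ hw.1.2)
    rw [langComplexity, hempty, Set.ncard_empty]
    exact Nat.zero_le B

/-- The union of the languages `L k`, each restricted to words whose length is within a factor `8`
of `2 ^ k`, so that a given length occurs at no more than three scales `k`. -/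
def dyadicUnion (L : ℕ → Set (List α)) : Set (List α) :=
  {w | ∃ k, w ∈ L k ∧ w.length ∈ Set.Ico (2 ^ k) (8 * 2 ^ k)}

theorem dyadicUnion_subset {L : ℕ → Set (List α)} {M : Set (List α)} (h : ∀ k, L k ⊆ M) :
    dyadicUnion L ⊆ M :=
  fun _ ⟨k, hw, _⟩ => h k hw

theorem log_two_mem_Icc_of_mem_Ico {k n : ℕ} (hn : n ∈ Set.Ico (2 ^ k) (8 * 2 ^ k)) :
    Nat.log 2 n ∈ Set.Icc k (k + 2) := by
  have hpos : n ≠ 0 := (Nat.two_pow_pos k |>.trans_le hn.1).ne'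
  have hlo : k ≤ Nat.log 2 n := Nat.le_log_of_pow_le one_lt_two hn.1
  have hhi : Nat.log 2 n < k + 3 := Nat.log_lt_of_lt_pow hpos (by rw [pow_add]; linarith [hn.2])
  exact ⟨hlo, Nat.le_of_lt_succ hhi⟩

theorem langComplexity_dyadicUnion_le {L : ℕ → Set (List α)} {b n : ℕ}
    (hL : ∀ k, langComplexity (L k) n ≤ b) : langComplexity (dyadicUnion L) n ≤ 3 * b := by
  classical
  set K : Finset ℕ := {k ∈ Finset.Icc (Nat.log 2 n - 2) (Nat.log 2 n) |
    n ∈ Set.Ico (2 ^ k) (8 * 2 ^ k)} with hK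
  have hKcard : K.card ≤ 3 := by
    refine (Finset.card_filter_le _ _).trans ?_
    rw [Nat.card_Icc]
    omega
  have hslice : {w ∈ dyadicUnion L | w.length = n} = ⋃ k ∈ K, {w ∈ L k | w.length = n} := by
    ext w
    simp only [Set.mem_iUnion, exists_prop, hK, Finset.mem_filter, Finset.mem_Icc]
    constructor
    · rintro ⟨⟨k, hw, hlen⟩, rfl⟩
      obtain ⟨hlo, hhi⟩ := log_two_mem_Icc_of_mem_Ico hlen
      exact ⟨k, ⟨⟨Nat.sub_le_of_le_add hhi, hlo⟩, hlen⟩, hw, rfl⟩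
    · rintro ⟨k, ⟨-, hlen⟩, hw, rfl⟩
      exact ⟨⟨k, hw, hlen⟩, rfl⟩
  calc langComplexity (dyadicUnion L) n
      ≤ ∑ k ∈ K, langComplexity (L k) n := by
        rw [langComplexity, hslice]
        exact K.set_ncard_biUnion_le _
    _ ≤ K.card * b := Finset.sum_le_card_nsmul K _ b fun k _ => hL k
    _ ≤ 3 * b := Nat.mul_le_mul_right b hKcard

theorem exists_mem_dyadicUnion_append {Q : ℕ → Set ℕ} (hQ : ∀ k, IsCutSet u (2 ^ k) (Q k))
    {w : List α} (hw : w ∈ Factors u) (hlen : 4 ≤ w.length) :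
    ∃ s ∈ dyadicUnion (fun k => factorsEndingAt u (Q k)),
      ∃ t ∈ dyadicUnion (fun k => factorsStartingAt u (Q k)), w = s ++ t := by
  obtain ⟨k, hk⟩ : ∃ k, Nat.log 2 w.length = 2 + k :=
    Nat.exists_eq_add_of_le (Nat.le_log_of_pow_le one_lt_two hlen)
  have hlo : 2 ^ (2 + k) ≤ w.length := hk ▸ Nat.pow_log_le_self 2 (by omega)
  have hhi : w.length < 2 ^ (2 + k + 1) := hk ▸ Nat.lt_pow_succ_log_self one_lt_two _
  obtain ⟨s, hs, t, ht, hst, hslen, htlen⟩ :=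
    (hQ k).exists_eq_append hw (by rwa [pow_add] at hlo) (by rw [pow_succ, pow_add] at hhi; omega)
  exact ⟨s, ⟨k, hs, hslen⟩, t, ⟨k, ht, htlen⟩, hst⟩

end Languages

/-- The inclusions in `Factors u` leave `S` and `T` finitely many words of each length even if `α`
is infinite, so that `langComplexity` never takes the junk value of `Set.ncard`. -/
theorem stmt2_general {α : Type*} (u : ℕ → α) [Finite (Set.range u)] (C : ℕ)
    (hp : ∀ n, 1 ≤ n → complexity u n ≤ C * n) :
    ∃ (B : ℕ) (S T : Set (List α)), S ⊆ Factors u ∧ T ⊆ Factors u ∧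
      (∀ n, langComplexity S n ≤ B) ∧ (∀ n, langComplexity T n ≤ B) ∧
      ∀ w ∈ Factors u, ∃ s ∈ S, ∃ t ∈ T, w = s ++ t := by
  choose Q hQ hQfin hQcard using fun k : ℕ => exists_isCutSet hp (Nat.two_pow_pos k)
  set K := (2 * C + 1) * (16 * C)
  have hshort : ∀ n < 4, complexity u n ≤ 3 * C + 1 := by
    rintro (_ | n) hn
    · rw [complexity_zero]
      omega
    · exact (hp _ (by omega)).trans (by nlinarith)
  -- A factor shorter than `4` is too short to be cut even at scale `2 ^ 0`.
  refine ⟨3 * C + 1 + 3 * K, {[]} ∪ dyadicUnion fun k => factorsEndingAt u (Q k),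
    {w ∈ Factors u | w.length < 4} ∪ dyadicUnion fun k => factorsStartingAt u (Q k),
    Set.union_subset (Set.singleton_subset_iff.2 (nil_mem_factors u))
      (dyadicUnion_subset fun k => factorsEndingAt_subset_factors u (Q k)),
    Set.union_subset (Set.sep_subset _ _)
      (dyadicUnion_subset fun k => factorsStartingAt_subset_factors u (Q k)),
    fun n => ?_, fun n => ?_, fun w hw => ?_⟩
  · refine (langComplexity_union_le _ _ n).trans (Nat.add_le_add ?_ ?_)
    · exact (langComplexity_singleton_le [] n).trans (Nat.le_add_left 1 _)
    · exact langComplexity_dyadicUnion_le fun k =>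
        (langComplexity_factorsEndingAt_le u (hQfin k) n).trans (hQcard k)
  · refine (langComplexity_union_le _ _ n).trans (Nat.add_le_add ?_ ?_)
    · exact langComplexity_factors_length_lt_le hshort n
    · exact langComplexity_dyadicUnion_le fun k =>
        (langComplexity_factorsStartingAt_le u (hQfin k) n).trans (hQcard k)
  · rcases lt_or_ge w.length 4 with hlen | hlen
    · exact ⟨[], Or.inl rfl, w, Or.inl ⟨hw, hlen⟩, rfl⟩
    · obtain ⟨s, hs, t, ht, hst⟩ := exists_mem_dyadicUnion_append hQ hw hlen
      exact ⟨s, Or.inr hs, t, Or.inr ht, hst⟩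

/-- if `p_u(n) ≤ C·n` for all `n ≥ 1` (`C > 0`), then there are a constant `B`
and languages `S`, `T` with `p_S(n) ≤ B`, `p_T(n) ≤ B` for all `n`, such that every factor
of `u` lies in `S·T`. -/
theorem stmt2 {α : Type*} [Fintype α] (u : ℕ → α) (C : ℕ) (hC : 0 < C)
    (hp : ∀ n, 1 ≤ n → complexity u n ≤ C * n) :
    ∃ (B : ℕ) (S T : Set (List α)),
      (∀ n, langComplexity S n ≤ B) ∧ (∀ n, langComplexity T n ≤ B) ∧
      ∀ w ∈ Factors u, ∃ s ∈ S, ∃ t ∈ T, w = s ++ t := by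
  obtain ⟨B, S, T, -, -, h⟩ := stmt2_general u C hp
  exact ⟨B, S, T, h⟩
end

section
/- Let f : ℕ_{>0} → ℕ be a nondecreasing function with f(1) ≥ 1, f(n) ≤ n for all n, and f(n) → ∞ as n → ∞. Then there exists an infinite word w over {a,b} with p_w(n) = O(n² f(n)) such that for every integer k ≥ 1, w ∉ 𝓦_k: there are no languages S_1, …, S_k with p_{S_i}(n) = O(1) for each i such that every factor of w belongs to S_1⋯S_k. -/
/-- Membership of the infinite word `u` in the class `𝓦_k`: its factors lie in a product of `k`
languages, each with a bounded number of words of every length. -/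
def MemW {α : Type*} (k : ℕ) (u : ℕ → α) : Prop :=
  ∃ S : Fin k → Set (List α),
    (∀ i, ∃ C : ℕ, ∀ n, langComplexity (S i) n ≤ C) ∧
    (∀ v ∈ Factors u, ∃ s : Fin k → List α, (∀ i, s i ∈ S i) ∧ v = (List.ofFn s).flatten)

section Languages

variable {α : Type*}

lemma langComplexity_iUnion_le {ι : Type*} [Fintype ι] (S : ι → Set (List α)) (n : ℕ) :
    langComplexity (⋃ i, S i) n ≤ ∑ i, langComplexity (S i) n := by
  have hunion : {w ∈ ⋃ i, S i | w.length = n} = ⋃ i, {w ∈ S i | w.length = n} := by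
    ext w
    simp
  simpa only [langComplexity, hunion] using Set.ncard_iUnion_le_of_fintype _

lemma card_le_of_langComplexity_le [Finite α] {L : Set (List α)} {C : ℕ}
    (hL : ∀ n, langComplexity L n ≤ C) {A : Finset (List α)} (hAL : ∀ v ∈ A, v ∈ L) {B : ℕ}
    (hAB : ∀ v ∈ A, v.length ≤ B) : A.card ≤ C * (B + 1) := by
  classical
  have hmaps : ∀ v ∈ A, v.length ∈ Finset.range (B + 1) := fun v hv =>
    Finset.mem_range_succ_iff.2 (hAB v hv)
  have hfiber : ∀ n ∈ Finset.range (B + 1), (A.filter fun v => v.length = n).card ≤ C := by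
    intro n _
    refine le_trans ?_ (hL n)
    rw [langComplexity, ← Set.ncard_coe_finset]
    refine Set.ncard_le_ncard (fun v hv => ?_) ((List.finite_length_eq α n).subset fun v hv => hv.2)
    obtain ⟨hvA, hvn⟩ := Finset.mem_filter.1 hv
    exact ⟨hAL v hvA, hvn⟩
  simpa only [Finset.card_range] using Finset.card_le_mul_card_image_of_maps_to hmaps C hfiber

end Languages

lemma exists_mem_lt_length_of_lt_length_flatten {α : Type*} {L : List (List α)} {B : ℕ}
    (h : L.length * B < L.flatten.length) : ∃ l ∈ L, B < l.length := by
  by_contra! hshort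
  rw [List.length_flatten] at h
  have hsum := List.sum_le_card_nsmul (L.map List.length) B (by simpa using hshort)
  rw [List.length_map, smul_eq_mul] at hsum
  omega

section Window

variable {α : Type*}

/-- The factor of length `n` at position `z` of the two-sided infinite word `u`. Two-sided words
allow a window to start before the block that it meets. -/
def window (u : ℤ → α) (z : ℤ) (n : ℕ) : List α :=
  (List.range n).map fun t : ℕ => u (z + t)

@[simp]
lemma length_window (u : ℤ → α) (z : ℤ) (n : ℕ) : (window u z n).length = n := by
  simp [window]

lemma window_eq_window_iff {u u' : ℤ → α} {z z' : ℤ} {n : ℕ} :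
    window u z n = window u' z' n ↔ ∀ t : ℕ, t < n → u (z + t) = u' (z' + t) := by
  simp [window, List.map_inj_left]

lemma wordSeg_eq_window_iff {u : ℕ → α} {u' : ℤ → α} {s : ℕ} {z : ℤ} {n : ℕ} :
    wordSeg u s n = window u' z n ↔ ∀ t < n, u (s + t) = u' (z + t) := by
  simp [wordSeg, window, List.map_inj_left]

lemma window_add (u : ℤ → α) (z : ℤ) (m n : ℕ) :
    window u z (m + n) = window u z m ++ window u (z + m) n := by
  simp [window, List.range_add, add_assoc]

lemma exists_eq_window_of_isInfix {u : ℤ → α} {z : ℤ} {n : ℕ} {v : List α}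
    (h : v <:+: window u z n) : ∃ z', v = window u z' v.length := by
  obtain ⟨l₁, l₂, h⟩ := h
  have hn : n = l₁.length + v.length + l₂.length := by
    simpa [add_assoc] using (congrArg List.length h).symm
  rw [hn, window_add, window_add] at h
  have hstart := (List.append_inj h (by simp)).1
  exact ⟨_, (List.append_inj hstart (by simp)).2⟩

end Window

section PeriodicWord

/-- The two-sided word `(a^i b^j)^ω` with a period starting at `0`; here and below, `false` stands
for `a` and `true` for `b`. -/
def periodicWord (i j : ℕ) (x : ℤ) : Bool :=
  decide ((i : ℤ) ≤ x % (i + j : ℤ))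

variable {i j i' j' : ℕ}

lemma periodicWord_eq_true_iff {x : ℤ} :
    periodicWord i j x = true ↔ (i : ℤ) ≤ x % (i + j : ℤ) := by
  simp [periodicWord]

lemma periodicWord_eq_false_iff (hij : 0 < i + j) {x : ℤ} :
    periodicWord i j x = false ↔ ∃ d : ℤ, (i + j) * d ≤ x ∧ x < (i + j) * d + i := by
  rw [← Bool.not_eq_true, periodicWord_eq_true_iff, not_le]
  constructor
  · intro h
    have hdiv := Int.mul_ediv_add_emod x (i + j)
    have hnonneg := Int.emod_nonneg x (show (i + j : ℤ) ≠ 0 by omega)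
    exact ⟨x / (i + j), by omega, by omega⟩
  · rintro ⟨d, hd, hd'⟩
    have hmod : x % (i + j : ℤ) = x - (i + j) * d := by
      rw [← Int.sub_mul_emod_self_left x (i + j) d]
      exact Int.emod_eq_of_lt (by omega) (by omega)
    omega

/-- The runs of `a` have length `i`, so that two letters `b` at distance less than `i` lie in the
same run of `b`. -/
lemma periodicWord_eq_true_of_mem_Icc {p q r : ℤ} (hp : periodicWord i j p = true)
    (hr : periodicWord i j r = true) (hq : q ∈ Set.Icc p r) (hpr : r < p + i) :
    periodicWord i j q = true := by
  obtain ⟨hpq, hqr⟩ := hq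
  have hij : 0 < i + j := by omega
  by_contra hfalse
  obtain ⟨d, hd, hd'⟩ := (periodicWord_eq_false_iff hij).1 (Bool.eq_false_of_not_eq_true hfalse)
  have hbefore : p < (i + j) * d := by
    by_contra! hle
    simp [(periodicWord_eq_false_iff hij).2 ⟨d, hle, by omega⟩] at hp
  have hafter : (i + j) * d + i ≤ r := by
    by_contra! hlt
    simp [(periodicWord_eq_false_iff hij).2 ⟨d, by omega, hlt⟩] at hr
  omega

lemma dvd_iff_periodicWord (hi : 0 < i) (hj : 0 < j) {x : ℤ} :
    (i + j : ℤ) ∣ x ↔ periodicWord i j (x - 1) = true ∧ periodicWord i j x = false := by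
  have hij : 0 < i + j := by omega
  constructor
  · rintro ⟨d, rfl⟩
    refine ⟨periodicWord_eq_true_iff.2 ?_, (periodicWord_eq_false_iff hij).2 ⟨d, by omega⟩⟩
    have hmod : ((i + j) * d - 1 : ℤ) % (i + j) = i + j - 1 := by
      rw [← Int.sub_mul_emod_self_left _ (i + j) (d - 1), Int.emod_eq_of_lt] <;> grind
    omega
  · rintro ⟨hprev, hx⟩
    obtain ⟨d, hd, hd'⟩ := (periodicWord_eq_false_iff hij).1 hx
    refine ⟨d, le_antisymm ?_ hd⟩
    by_contra! hlt
    simp [(periodicWord_eq_false_iff (x := x - 1) hij).2 ⟨d, by omega, by omega⟩] at hprev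

/-- A boundary `ba` marks the start of a period in both words. Its next occurrence is one period of
the first word later, and the first `b` after it comes after a run `a^i`. -/
lemma dvd_and_le_of_window_periodicWord_eq (hi : 0 < i) (hj : 0 < j) (hi' : 0 < i') (hj' : 0 < j')
    {z z' : ℤ} {n : ℕ} (hn : 2 * (i + j) < n)
    (h : window (periodicWord i j) z n = window (periodicWord i' j') z' n) :
    i' + j' ∣ i + j ∧ i' ≤ i := by
  have hagree (t : ℤ) (ht : 0 ≤ t) (htn : t < n) :
      periodicWord i j (z + t) = periodicWord i' j' (z' + t) := by
    lift t to ℕ using ht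
    exact window_eq_window_iff.1 h t (by omega)
  have hboundary (t : ℤ) (ht : 1 ≤ t) (htn : t < n) :
      (i + j : ℤ) ∣ z + t ↔ (i' + j' : ℤ) ∣ z' + t := by
    rw [dvd_iff_periodicWord hi hj, dvd_iff_periodicWord hi' hj', add_sub_assoc, add_sub_assoc,
      hagree t (by omega) htn, hagree (t - 1) (by omega) (by omega)]
  obtain ⟨t, ht, htp, hdvd⟩ : ∃ t : ℤ, 1 ≤ t ∧ t ≤ i + j ∧ (i + j : ℤ) ∣ z + t := by
    have hlt := Int.emod_lt_of_pos z (show (0 : ℤ) < i + j by omega)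
    have hnonneg := Int.emod_nonneg z (show (i + j : ℤ) ≠ 0 by omega)
    refine ⟨i + j - z % (i + j), by omega, by omega, ?_⟩
    rw [show z + (i + j - z % (i + j)) = z - z % (i + j) + (i + j) by ring]
    exact dvd_add_self_right.2 Int.dvd_self_sub_emod
  have hdvd' := (hboundary t ht (by omega)).1 hdvd
  constructor
  · have hnext : (i' + j' : ℤ) ∣ z' + t + (i + j) := by
      rw [add_assoc]
      refine (hboundary (t + (i + j)) (by omega) (by omega)).1 ?_
      rw [← add_assoc]
      exact dvd_add_self_right.2 hdvd
    exact_mod_cast (dvd_add_right hdvd').1 hnext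
  · have hb : periodicWord i' j' (z' + t + i) = true := by
      rw [add_assoc, ← hagree (t + i) (by omega) (by omega), ← add_assoc, periodicWord_eq_true_iff,
        ← Int.emod_add_emod, Int.emod_eq_zero_of_dvd hdvd, zero_add,
        Int.emod_eq_of_lt (by omega) (by omega)]
    rw [periodicWord_eq_true_iff, ← Int.emod_add_emod, Int.emod_eq_zero_of_dvd hdvd', zero_add]
      at hb
    exact (show i' ≤ i % (i' + j') from mod_cast hb).trans (Nat.mod_le _ _)

/-- The word `v` is a factor of `(a^i b^j)^ω` longer than two periods. -/
def IsLongFactor (i j : ℕ) (v : List Bool) : Prop :=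
  2 * (i + j) < v.length ∧ ∃ z, v = window (periodicWord i j) z v.length

lemma IsLongFactor.unique (hi : 0 < i) (hj : 0 < j) (hi' : 0 < i') (hj' : 0 < j') {v : List Bool}
    (h : IsLongFactor i j v) (h' : IsLongFactor i' j' v) : i = i' ∧ j = j' := by
  obtain ⟨hlong, z, hz⟩ := h
  obtain ⟨hlong', z', hz'⟩ := h'
  have heq := hz.symm.trans hz'
  obtain ⟨hdvd', hle'⟩ := dvd_and_le_of_window_periodicWord_eq hi hj hi' hj' hlong heq
  obtain ⟨hdvd, hle⟩ := dvd_and_le_of_window_periodicWord_eq hi' hj' hi hj hlong' heq.symm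
  have hperiod := Nat.dvd_antisymm hdvd hdvd'
  omega

end PeriodicWord

section Block

/-- The exponent of the blocks with parameter `j`. It takes every value at infinitely many `j`. -/
def exponent (j : ℕ) : ℕ := j.unpair.2

/-- The length of the word `(a^i b^j)^(exponent j)`. -/
def blockLength (i j : ℕ) : ℕ := (i + j) * exponent j

/-- The two-sided word in which the block `(a^i b^j)^(exponent j)` starts at `0` and is surrounded
by letters `a`. -/
def paddedBlock (i j : ℕ) (x : ℤ) : Bool :=
  decide (0 ≤ x ∧ x < blockLength i j) && periodicWord i j x

variable {i j : ℕ}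

lemma paddedBlock_eq_true_iff {x : ℤ} :
    paddedBlock i j x = true ↔ (0 ≤ x ∧ x < blockLength i j) ∧ periodicWord i j x = true := by
  simp [paddedBlock]

lemma paddedBlock_eq_periodicWord {x : ℤ} (hx : 0 ≤ x) (hx' : x < blockLength i j) :
    paddedBlock i j x = periodicWord i j x := by
  simp [paddedBlock, hx, hx']

lemma paddedBlock_eq_false {x : ℤ} (hx : x < 0 ∨ blockLength i j ≤ x) :
    paddedBlock i j x = false := by
  rw [← Bool.not_eq_true, paddedBlock_eq_true_iff]
  omega

/-- The windows of length `n` of a padded block. The offsets in the first interval account for the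
windows that meet the left padding and for those inside the block, whose offset matters only modulo
`i + j`; the offsets in the second one account for the windows that meet the right padding. -/
noncomputable def blockWindows (i j n : ℕ) : Finset (List Bool) :=
  (Finset.Ico (-n : ℤ) (i + j) ∪ Finset.Icc (blockLength i j - n : ℤ) (blockLength i j)).image
    fun z => window (paddedBlock i j) z n

lemma card_blockWindows_le (i j n : ℕ) : (blockWindows i j n).card ≤ i + j + 2 * n + 1 := by
  refine Finset.card_image_le.trans ((Finset.card_union_le _ _).trans ?_)
  simp only [Int.card_Ico, Int.card_Icc]
  omega

lemma window_paddedBlock_mem_blockWindows (hj : 0 < j) (z : ℤ) (n : ℕ) :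
    window (paddedBlock i j) z n ∈ blockWindows i j n := by
  simp only [blockWindows, Finset.mem_image, Finset.mem_union, Finset.mem_Ico, Finset.mem_Icc,
    window_eq_window_iff]
  have hperiod : (0 : ℤ) < i + j := by omega
  rcases lt_or_ge z (-n) with hleft | hleft
  · refine ⟨-n, by omega, fun t ht => ?_⟩
    rw [paddedBlock_eq_false (by omega), paddedBlock_eq_false (by omega)]
  rcases lt_or_ge z 0 with hneg | hneg
  · exact ⟨z, by omega, fun t _ => rfl⟩
  rcases lt_or_ge (blockLength i j : ℤ) z with hright | hright
  · refine ⟨blockLength i j, by omega, fun t _ => ?_⟩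
    rw [paddedBlock_eq_false (by omega), paddedBlock_eq_false (by omega)]
  rcases lt_or_ge (blockLength i j - n : ℤ) z with hend | hinside
  · exact ⟨z, by omega, fun t _ => rfl⟩
  · have hnonneg := Int.emod_nonneg z hperiod.ne'
    have hlt := Int.emod_lt_of_pos z hperiod
    have hle : z % (i + j) ≤ z := by
      lift z to ℕ using hneg
      exact_mod_cast Nat.mod_le z (i + j)
    refine ⟨z % (i + j), by omega, fun t ht => ?_⟩
    rw [paddedBlock_eq_periodicWord (by omega) (by omega),
      paddedBlock_eq_periodicWord (by omega) (by omega), periodicWord, periodicWord,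
      Int.emod_add_emod]

end Block

section RunWord

lemma exists_eq_Ico_of_ordConnected {A : Finset ℕ} {n : ℕ} (hA : (A : Set ℕ).OrdConnected)
    (hAn : A ⊆ Finset.range n) : ∃ x ≤ n, ∃ y ≤ n, A = Finset.Ico x y := by
  rcases A.eq_empty_or_nonempty with rfl | hne
  · exact ⟨0, n.zero_le, 0, n.zero_le, by simp⟩
  have hmin := Finset.mem_range.1 (hAn (A.min'_mem hne))
  have hmax := Finset.mem_range.1 (hAn (A.max'_mem hne))
  refine ⟨A.min' hne, hmin.le, A.max' hne + 1, hmax, Finset.ext fun t => ?_⟩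
  rw [Finset.mem_Ico, Nat.lt_succ_iff]
  exact ⟨fun ht => ⟨A.min'_le t ht, A.le_max' t ht⟩,
    fun ht => hA.out (A.min'_mem hne) (A.max'_mem hne) ht⟩

/-- The words `a^x b^y a^z` of length `n`. -/
def runWords (n : ℕ) : Finset (List Bool) :=
  (Finset.range (n + 1) ×ˢ Finset.range (n + 1)).image
    fun x => (List.range n).map fun t => decide (t ∈ Finset.Ico x.1 x.2)

lemma card_runWords_le (n : ℕ) : (runWords n).card ≤ (n + 1) ^ 2 :=
  Finset.card_image_le.trans (by simp [sq])

lemma window_mem_runWords {u : ℤ → Bool} {z : ℤ} {n : ℕ}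
    (h : {t : ℕ | t < n ∧ u (z + t) = true}.OrdConnected) : window u z n ∈ runWords n := by
  obtain ⟨x, hx, y, hy, hxy⟩ := exists_eq_Ico_of_ordConnected
    (A := (Finset.range n).filter fun t => u (z + t) = true) (by simpa using h)
    (Finset.filter_subset _ _)
  refine Finset.mem_image.2 ⟨(x, y), by simp; omega, List.map_congr_left fun t ht => ?_⟩
  simp [← hxy, List.mem_range.1 ht]

lemma replicate_false_mem_runWords (n : ℕ) : List.replicate n false ∈ runWords n :=
  Finset.mem_image.2 ⟨(0, 0), by simp, by simp⟩

lemma window_paddedBlock_mem_runWords {i j n : ℕ} (hn : n ≤ i) (z : ℤ) :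
    window (paddedBlock i j) z n ∈ runWords n := by
  refine window_mem_runWords ⟨fun p ⟨_, hp⟩ r ⟨hrn, hr⟩ q ⟨hpq, hqr⟩ => ⟨by omega, ?_⟩⟩
  rw [paddedBlock_eq_true_iff] at hp hr ⊢
  exact ⟨by omega,
    periodicWord_eq_true_of_mem_Icc hp.2 hr.2 ⟨by omega, by omega⟩ (by omega)⟩

end RunWord

section BlockWord

/-- The position at which the block with parameters `Nat.unpair t` starts. The factor `2` makes the
gaps so long that a window of length `n` starting at a position `≥ n` meets at most one block. -/
def blockStart : ℕ → ℕ
  | 0 => 0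
  | t + 1 => 2 * (blockStart t + blockLength t.unpair.1 t.unpair.2)

open Classical in
/-- The infinite word consisting of the blocks `(a^i b^j)^(exponent j)` with `1 ≤ j ≤ f i`,
separated by runs of `a`. -/
noncomputable def blockWord (f : ℕ → ℕ) (p : ℕ) : Bool :=
  decide (∃ i j, 0 < j ∧ j ≤ f i ∧ paddedBlock i j (p - blockStart (Nat.pair i j)) = true)

variable {f : ℕ → ℕ}

lemma blockWord_eq_true_iff {p : ℕ} : blockWord f p = true ↔
    ∃ i j, 0 < j ∧ j ≤ f i ∧ paddedBlock i j (p - blockStart (Nat.pair i j)) = true := by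
  simp [blockWord]

lemma two_mul_blockStart_add_le {i j t : ℕ} (h : Nat.pair i j < t) :
    2 * (blockStart (Nat.pair i j) + blockLength i j) ≤ blockStart t := by
  induction t, h using Nat.le_induction with
  | base => simp [blockStart]
  | succ n _ ih =>
    rw [blockStart]
    omega

lemma eq_of_mem_blocks {i j i' j' x y : ℕ}
    (hx : blockStart (Nat.pair i j) ≤ x ∧ x < blockStart (Nat.pair i j) + blockLength i j)
    (hy : blockStart (Nat.pair i' j') ≤ y ∧ y < blockStart (Nat.pair i' j') + blockLength i' j')
    (hxy : x ≤ 2 * y) (hyx : y ≤ 2 * x) : i = i' ∧ j = j' := by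
  rw [← Nat.pair_eq_pair]
  rcases lt_trichotomy (Nat.pair i j) (Nat.pair i' j') with h | h | h
  · have := two_mul_blockStart_add_le h
    omega
  · exact h
  · have := two_mul_blockStart_add_le h
    omega

lemma blockWord_eq_paddedBlock {i j x y : ℕ} (hj : 0 < j) (hji : j ≤ f i)
    (hx : blockStart (Nat.pair i j) ≤ x ∧ x < blockStart (Nat.pair i j) + blockLength i j)
    (hxy : x ≤ 2 * y) (hyx : y ≤ 2 * x) :
    blockWord f y = paddedBlock i j (y - blockStart (Nat.pair i j)) := by
  rw [Bool.eq_iff_iff, blockWord_eq_true_iff]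
  refine ⟨?_, fun h => ⟨i, j, hj, hji, h⟩⟩
  rintro ⟨i', j', _, _, h⟩
  have hmem := (paddedBlock_eq_true_iff.1 h).1
  obtain ⟨rfl, rfl⟩ := eq_of_mem_blocks hx (i' := i') (j' := j') (y := y) (by omega) hxy hyx
  exact h

lemma wordSeg_blockWord_eq_replicate_or_window (f : ℕ → ℕ) {s n : ℕ} (hs : n ≤ s) :
    wordSeg (blockWord f) s n = List.replicate n false ∨
      ∃ i j, 0 < j ∧ j ≤ f i ∧ ∃ z, wordSeg (blockWord f) s n = window (paddedBlock i j) z n := by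
  by_cases h : ∃ t < n, blockWord f (s + t) = true
  · right
    obtain ⟨t, ht, hb⟩ := h
    obtain ⟨i, j, hj, hji, hblock⟩ := blockWord_eq_true_iff.1 hb
    have hmem := (paddedBlock_eq_true_iff.1 hblock).1
    refine ⟨i, j, hj, hji, s - blockStart (Nat.pair i j), wordSeg_eq_window_iff.2 fun t' ht' => ?_⟩
    rw [blockWord_eq_paddedBlock hj hji (x := s + t) (by omega) (by omega) (by omega)]
    congr 1
    push_cast
    ring
  · left
    push Not at h
    refine List.eq_replicate_iff.2 ⟨by simp [wordSeg], fun c hc => ?_⟩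
    obtain ⟨t, ht, rfl⟩ := List.mem_map.1 hc
    exact Bool.eq_false_of_not_eq_true (h t (List.mem_range.1 ht))

end BlockWord

section Complexity

variable {f : ℕ → ℕ}

/-- A finite set that contains the factors of length `n`: those starting before position `n`, those
without letters `b` or meeting a block with `i > n`, and those meeting a block with `i ≤ n`. -/
noncomputable def factorCandidates (f : ℕ → ℕ) (n : ℕ) : Finset (List Bool) :=
  (Finset.range n).image (fun s => wordSeg (blockWord f) s n) ∪ runWords n ∪
    (Finset.Icc 1 n ×ˢ Finset.Icc 1 (f n)).biUnion fun x => blockWindows x.1 x.2 n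

lemma wordSeg_mem_factorCandidates (hf : Monotone f) (hle : ∀ n, f n ≤ n) (s n : ℕ) :
    wordSeg (blockWord f) s n ∈ factorCandidates f n := by
  simp only [factorCandidates, Finset.mem_union, Finset.mem_biUnion, Prod.exists]
  rcases lt_or_ge s n with hs | hs
  · exact Or.inl (Or.inl (Finset.mem_image_of_mem _ (Finset.mem_range.2 hs)))
  obtain hw | ⟨i, j, hj, hji, z, hw⟩ := wordSeg_blockWord_eq_replicate_or_window f hs <;> rw [hw]
  · exact Or.inl (Or.inr (replicate_false_mem_runWords n))
  rcases le_total n i with hni | hin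
  · exact Or.inl (Or.inr (window_paddedBlock_mem_runWords hni z))
  · refine Or.inr ⟨i, j, ?_, window_paddedBlock_mem_blockWindows hj z n⟩
    have hi := hle i
    have hfin := hf hin
    simp only [Finset.mem_product, Finset.mem_Icc]
    omega

lemma card_factorCandidates_le (hle : ∀ n, f n ≤ n) {n : ℕ} (hfn : 1 ≤ f n) :
    (factorCandidates f n).card ≤ 10 * (n ^ 2 * f n) := by
  have hblocks : ((Finset.Icc 1 n ×ˢ Finset.Icc 1 (f n)).biUnion
      fun x => blockWindows x.1 x.2 n).card ≤ n * f n * (4 * n + 1) := by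
    refine (Finset.card_biUnion_le_card_mul _ _ (4 * n + 1) fun x hx => ?_).trans (by simp)
    have hfn := hle n
    have hx := Finset.mem_product.1 hx
    simp only [Finset.mem_Icc] at hx
    exact (card_blockWindows_le x.1 x.2 n).trans (by omega)
  have hstart := Finset.card_image_le (s := Finset.range n)
    (f := fun s => wordSeg (blockWord f) s n)
  rw [Finset.card_range] at hstart
  have hn : 1 ≤ n := hfn.trans (hle n)
  calc (factorCandidates f n).card ≤ n + (n + 1) ^ 2 + n * f n * (4 * n + 1) :=
        (Finset.card_union_le _ _).trans (Nat.add_le_add ((Finset.card_union_le _ _).trans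
          (Nat.add_le_add hstart (card_runWords_le n))) hblocks)
    _ ≤ n ^ 2 + (n + n) ^ 2 + n * f n * (4 * n + n) := by
        gcongr
        exact Nat.le_self_pow two_ne_zero n
    _ = n ^ 2 * 5 + 5 * (n ^ 2 * f n) := by ring
    _ ≤ n ^ 2 * (5 * f n) + 5 * (n ^ 2 * f n) := by gcongr; omega
    _ = 10 * (n ^ 2 * f n) := by ring

lemma complexity_blockWord_le (hf : Monotone f) (hle : ∀ n, f n ≤ n) {n : ℕ} (hfn : 1 ≤ f n) :
    complexity (blockWord f) n ≤ 10 * (n ^ 2 * f n) := by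
  refine le_trans ?_ (card_factorCandidates_le hle hfn)
  rw [complexity, ← Set.ncard_coe_finset]
  refine Set.ncard_le_ncard ?_ (Finset.finite_toSet _)
  rintro v ⟨rfl, s, hs⟩
  rw [hs]
  simpa [wordSeg] using wordSeg_mem_factorCandidates hf hle s v.length

end Complexity

section NotMemW

variable {f : ℕ → ℕ}

lemma card_le_of_exists_isLongFactor {U : Set (List Bool)} {C : ℕ}
    (hU : ∀ n, langComplexity U n ≤ C) {A : Finset (ℕ × ℕ)} (hA : ∀ x ∈ A, 0 < x.1 ∧ 0 < x.2)
    {B : ℕ} (hAU : ∀ x ∈ A, ∃ v ∈ U, v.length ≤ B ∧ IsLongFactor x.1 x.2 v) :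
    A.card ≤ C * (B + 1) := by
  choose! g hgU hglen hg using hAU
  have hinj : Set.InjOn g A := by
    intro x hx y hy hxy
    obtain ⟨hi, hj⟩ := (hg x hx).unique (hA x hx).1 (hA x hx).2 (hA y hy).1 (hA y hy).2
      (hxy ▸ hg y hy)
    exact Prod.ext hi hj
  rw [← Finset.card_image_of_injOn hinj]
  exact card_le_of_langComplexity_le hU (Finset.forall_mem_image.2 hgU)
    (Finset.forall_mem_image.2 hglen)

/-- Otherwise the `N Q` blocks with `N ≤ i < 2N` and with `Q` prescribed values of `j` would give
`N Q` distinct words of `U` of length at most `4Nm`, but there are only `O(N)` of these. -/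
lemma exists_block_forall_not_isLongFactor (hle : ∀ n, f n ≤ n)
    (htop : Filter.Tendsto f Filter.atTop Filter.atTop) {U : Set (List Bool)} {C : ℕ}
    (hU : ∀ n, langComplexity U n ≤ C) {m : ℕ} (hm : 0 < m) :
    ∃ i j, 0 < j ∧ j ≤ f i ∧ exponent j = m ∧
      ∀ v ∈ U, v.length ≤ blockLength i j → ¬ IsLongFactor i j v := by
  by_contra! hlong
  set Q := C * (4 * m + 1) + 1
  obtain ⟨N, hN⟩ := Filter.eventually_atTop.1 (htop.eventually_ge_atTop (Nat.pair Q m))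
  have hpos (c : ℕ) : 0 < Nat.pair c m := hm.trans_le (Nat.right_le_pair c m)
  have hNpos : 0 < N := (hpos Q).trans_le ((hN N le_rfl).trans (hle N))
  set A := Finset.Ico N (2 * N) ×ˢ (Finset.range Q).image fun c => Nat.pair c m
  have hAcard : A.card = N * Q := by
    have hinj : Function.Injective fun c => Nat.pair c m := fun c c' h => (Nat.pair_eq_pair.1 h).1
    rw [Finset.card_product, Finset.card_image_of_injective _ hinj, Nat.card_Ico, Finset.card_range,
      two_mul, Nat.add_sub_cancel]
  have hA : ∀ x ∈ A, N ≤ x.1 ∧ x.1 < 2 * N ∧ ∃ c < Q, Nat.pair c m = x.2 := by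
    simp [A, and_assoc]
  have hcard : N * Q ≤ C * (4 * N * m + 1) := by
    rw [← hAcard]
    refine card_le_of_exists_isLongFactor hU (fun x hx => ?_) fun x hx => ?_ <;>
      obtain ⟨hi, hi', c, hc, hcx⟩ := hA x hx
    · exact ⟨hNpos.trans_le hi, hcx ▸ hpos c⟩
    · have hji : Nat.pair c m ≤ f x.1 := (Nat.pair_lt_pair_left m hc).le.trans (hN x.1 hi)
      have hexp : exponent (Nat.pair c m) = m := by simp [exponent]
      obtain ⟨v, hvU, hlen, hv⟩ := hlong x.1 (Nat.pair c m) (hpos c) hji hexp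
      refine ⟨v, hvU, hlen.trans ?_, hcx ▸ hv⟩
      have hi_le := hle x.1
      rw [blockLength, hexp]
      exact Nat.mul_le_mul_right m (by omega)
  have hlt : N * Q < N * Q :=
    calc N * Q ≤ C * (4 * N * m + 1) := hcard
      _ ≤ C * (4 * N * m + N) := by gcongr; omega
      _ = N * (C * (4 * m + 1)) := by ring
      _ < N * Q := by gcongr; omega
  exact hlt.false

lemma isLongFactor_of_isInfix {i j : ℕ} (hj : 0 < j) (hji : j ≤ f i) {v : List Bool}
    (hv : v <:+: wordSeg (blockWord f) (blockStart (Nat.pair i j)) (blockLength i j))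
    (hlong : 2 * (i + j) < v.length) : IsLongFactor i j v := by
  have hblock : wordSeg (blockWord f) (blockStart (Nat.pair i j)) (blockLength i j) =
      window (periodicWord i j) 0 (blockLength i j) := by
    refine wordSeg_eq_window_iff.2 fun t ht => ?_
    rw [blockWord_eq_paddedBlock hj hji (x := blockStart (Nat.pair i j) + t)
      ⟨by omega, by omega⟩ (by omega) (by omega),
      ← paddedBlock_eq_periodicWord (by omega) (by omega)]
    congr 1
    push_cast
    ring
  exact ⟨hlong, exists_eq_window_of_isInfix (hblock ▸ hv)⟩

lemma not_memW_blockWord (hle : ∀ n, f n ≤ n)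
    (htop : Filter.Tendsto f Filter.atTop Filter.atTop) (k : ℕ) : ¬ MemW k (blockWord f) := by
  rintro ⟨S, hS, hfac⟩
  choose C hC using hS
  obtain ⟨i, j, hj, hji, hexp, hshort⟩ := exists_block_forall_not_isLongFactor hle htop
    (fun n => (langComplexity_iUnion_le S n).trans (Finset.sum_le_sum fun r _ => hC r n))
    (m := 2 * k + 1) (by omega)
  set w := wordSeg (blockWord f) (blockStart (Nat.pair i j)) (blockLength i j) with hw
  have hlen : w.length = blockLength i j := by simp [hw, wordSeg]
  obtain ⟨s, hs, hws⟩ := hfac w ⟨_, by rw [hlen]⟩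
  obtain ⟨v, hv, hlong⟩ : ∃ v ∈ List.ofFn s, 2 * (i + j) < v.length := by
    apply exists_mem_lt_length_of_lt_length_flatten
    rw [← hws, hlen, List.length_ofFn, blockLength, hexp]
    nlinarith
  obtain ⟨r, rfl⟩ := List.mem_ofFn.1 hv
  have hsub : s r <:+: w := hws ▸ List.infix_of_mem_flatten hv
  exact hshort (s r) (Set.mem_iUnion_of_mem r (hs r)) (hlen ▸ hsub.length_le)
    (isLongFactor_of_isInfix hj hji hsub hlong)

end NotMemW

section MonotoneMinorant

open Classical in
/-- The largest monotone function below both `f` and the identity, which replaces the growth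
function `f` in the construction. -/
noncomputable def monotoneMinorant (f : ℕ → ℕ) (n : ℕ) : ℕ :=
  Nat.findGreatest (fun m => ∀ k ≥ n, m ≤ f k) n

variable {f : ℕ → ℕ}

lemma le_monotoneMinorant_iff {m n : ℕ} :
    m ≤ monotoneMinorant f n ↔ m ≤ n ∧ ∀ k ≥ n, m ≤ f k := by
  classical
  refine ⟨fun h => ⟨h.trans (Nat.findGreatest_le n), fun k hk => h.trans ?_⟩,
    fun h => Nat.le_findGreatest h.1 h.2⟩
  exact Nat.findGreatest_spec (P := fun m => ∀ k ≥ n, m ≤ f k) n.zero_le (fun k _ => (f k).zero_le)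
    k hk

lemma monotone_monotoneMinorant : Monotone (monotoneMinorant f) := fun m n hmn => by
  obtain ⟨hm, hf⟩ := le_monotoneMinorant_iff.1 (le_refl (monotoneMinorant f m))
  exact le_monotoneMinorant_iff.2 ⟨hm.trans hmn, fun k hk => hf k (hmn.trans hk)⟩

lemma monotoneMinorant_le_self (n : ℕ) : monotoneMinorant f n ≤ n :=
  (le_monotoneMinorant_iff.1 le_rfl).1

lemma monotoneMinorant_le (n : ℕ) : monotoneMinorant f n ≤ f n :=
  (le_monotoneMinorant_iff.1 le_rfl).2 n le_rfl

lemma tendsto_monotoneMinorant (htop : Filter.Tendsto f Filter.atTop Filter.atTop) :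
    Filter.Tendsto (monotoneMinorant f) Filter.atTop Filter.atTop := by
  refine Filter.tendsto_atTop.2 fun m => ?_
  filter_upwards [Filter.eventually_ge_atTop m,
    Filter.eventually_forall_ge_atTop.2 (htop.eventually_ge_atTop m)] with n hmn hf
  exact le_monotoneMinorant_iff.2 ⟨hmn, hf⟩

end MonotoneMinorant

theorem stmt17_general (f : ℕ → ℕ) (hpos : ∀ n, 1 ≤ n → 1 ≤ f n)
    (htop : Filter.Tendsto f Filter.atTop Filter.atTop) :
    ∃ w : ℕ → Bool, (∃ c : ℕ, ∀ n, 1 ≤ n → complexity w n ≤ c * (n ^ 2 * f n)) ∧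
      ∀ k : ℕ, ¬ MemW k w := by
  refine ⟨blockWord (monotoneMinorant f), ⟨10, fun n hn => ?_⟩,
    not_memW_blockWord monotoneMinorant_le_self (tendsto_monotoneMinorant htop)⟩
  have hone : 1 ≤ monotoneMinorant f n :=
    le_monotoneMinorant_iff.2 ⟨hn, fun k hk => hpos k (hn.trans hk)⟩
  refine (complexity_blockWord_le monotone_monotoneMinorant monotoneMinorant_le_self hone).trans ?_
  gcongr
  exact monotoneMinorant_le n

/-- for any nondecreasing `f` with `f(1) ≥ 1`, `f(n) ≤ n` and `f(n) → ∞`,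
there is an infinite word `w` of complexity `O(n² f(n))` which belongs to no `𝓦_k`. -/
theorem stmt17 (f : ℕ → ℕ) (hf1 : 1 ≤ f 1)
    (hmono : ∀ m n, 1 ≤ m → m ≤ n → f m ≤ f n)
    (hle : ∀ n, 1 ≤ n → f n ≤ n)
    (htop : Filter.Tendsto f Filter.atTop Filter.atTop) :
    ∃ w : ℕ → Bool,
      (∃ c : ℕ, ∀ n, 1 ≤ n → complexity w n ≤ c * (n ^ 2 * f n)) ∧
      ∀ k : ℕ, 1 ≤ k →
        ¬ ∃ S : Fin k → Set (List Bool),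
            (∀ i, ∃ C : ℕ, ∀ n, langComplexity (S i) n ≤ C) ∧
            (∀ v ∈ Factors w, ∃ s : Fin k → List Bool,
              (∀ i, s i ∈ S i) ∧ v = (List.ofFn s).flatten) := by
  obtain ⟨w, hw, hW⟩ := stmt17_general f (fun n hn => hf1.trans (hmono 1 n le_rfl hn)) htop
  exact ⟨w, hw, fun k _ => hW k⟩
end
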